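/- arXiv:2112.04026 — 3 statements merged into one kernel-verified Lean document; each statement's English description precedes it below -/
import Mathlib

section
/- Let α ∈ ℝ with α > 0 and α ≠ 1, and let μ, ν ∈ [0,∞) with μ ≠ ν. Then (2^α·(μ^α + ν^α) − 2·(μ + ν)^α)/(2^α − 2) > 0; moreover the expression equals 0 when μ = ν. -/
/-!
Since `(μ + ν) ^ α = 2 ^ α * ((μ + ν) / 2) ^ α`, the numerator is `2 ^ (α + 1)` times the gap
between the mean of `μ ^ α`, `ν ^ α` and the value of `t ↦ t ^ α` at the midpoint. For `α > 1`
strict convexity makes this gap positive, for `0 < α < 1` strict concavity makes it negative, and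
`2 ^ α - 2` changes sign in the same way.
-/

section Midpoint

variable {𝕜 E β : Type*} [Ring 𝕜] [LinearOrder 𝕜] [IsStrictOrderedRing 𝕜] [Invertible (2 : 𝕜)]
  [AddCommGroup E] [Module 𝕜 E] [AddCommGroup β] [PartialOrder β] [Module 𝕜 β]
  {s : Set E} {f : E → β} {x y : E}

theorem map_midpoint_lt_of_strictConvexOn (hf : StrictConvexOn 𝕜 s f)
    (hx : x ∈ s) (hy : y ∈ s) (hxy : x ≠ y) :
    f (midpoint 𝕜 x y) < midpoint 𝕜 (f x) (f y) := by
  have invOf_two_pos : (0 : 𝕜) < ⅟2 := invOf_pos.2 two_pos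
  simpa only [midpoint_eq_smul_add, smul_add] using
    hf.2 hx hy hxy invOf_two_pos invOf_two_pos invOf_two_add_invOf_two

theorem midpoint_lt_map_of_strictConcaveOn (hf : StrictConcaveOn 𝕜 s f)
    (hx : x ∈ s) (hy : y ∈ s) (hxy : x ≠ y) :
    midpoint 𝕜 (f x) (f y) < f (midpoint 𝕜 x y) :=
  map_midpoint_lt_of_strictConvexOn (β := βᵒᵈ) hf hx hy hxy

end Midpoint

section Rpow

variable {x y : ℝ}

theorem two_rpow_mul_midpoint_rpow (hxy : 0 ≤ x + y) (p : ℝ) :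
    (2 : ℝ) ^ p * midpoint ℝ x y ^ p = (x + y) ^ p := by
  have midpoint_eq : midpoint ℝ x y = (x + y) / 2 := by
    rw [midpoint_eq_smul_add, smul_eq_mul, invOf_eq_inv, inv_mul_eq_div]
  rw [midpoint_eq, ← Real.mul_rpow zero_le_two (by positivity), mul_div_cancel₀ _ two_ne_zero]

theorem two_mul_add_rpow_lt {p : ℝ} (hp : 1 < p) (hx : 0 ≤ x) (hy : 0 ≤ y) (hxy : x ≠ y) :
    2 * (x + y) ^ p < (2 : ℝ) ^ p * (x ^ p + y ^ p) :=
  calc 2 * (x + y) ^ p = 2 * (2 ^ p * midpoint ℝ x y ^ p) := by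
        rw [two_rpow_mul_midpoint_rpow (add_nonneg hx hy)]
    _ < 2 * (2 ^ p * midpoint ℝ (x ^ p) (y ^ p)) := by
        gcongr
        exact map_midpoint_lt_of_strictConvexOn (strictConvexOn_rpow hp) hx hy hxy
    _ = 2 ^ p * (x ^ p + y ^ p) := by
        rw [mul_left_comm, two_mul, midpoint_add_self]

theorem lt_two_mul_add_rpow {p : ℝ} (hp₀ : 0 < p) (hp₁ : p < 1)
    (hx : 0 ≤ x) (hy : 0 ≤ y) (hxy : x ≠ y) :
    (2 : ℝ) ^ p * (x ^ p + y ^ p) < 2 * (x + y) ^ p :=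
  calc 2 ^ p * (x ^ p + y ^ p) = 2 * (2 ^ p * midpoint ℝ (x ^ p) (y ^ p)) := by
        rw [mul_left_comm, two_mul (midpoint ℝ _ _), midpoint_add_self]
    _ < 2 * (2 ^ p * midpoint ℝ x y ^ p) := by
        gcongr
        exact midpoint_lt_map_of_strictConcaveOn (Real.strictConcaveOn_rpow hp₀ hp₁) hx hy hxy
    _ = 2 * (x + y) ^ p := by
        rw [two_rpow_mul_midpoint_rpow (add_nonneg hx hy)]

theorem two_mul_add_self_rpow (hx : 0 ≤ x) (p : ℝ) :
    2 * (x + x) ^ p = (2 : ℝ) ^ p * (x ^ p + x ^ p) := by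
  rw [← two_mul, Real.mul_rpow zero_le_two hx, ← two_mul, mul_left_comm]

end Rpow

/-- Strict positivity of the associated semi-metric for `α`-stable models:
for `α > 0`, `α ≠ 1` and `μ ≠ ν` nonnegative,
`(2^α (μ^α + ν^α) − 2 (μ+ν)^α)/(2^α − 2) > 0`, and the expression is `0` for `μ = ν`. -/
theorem stmt_3 (α : ℝ) (hα : 0 < α) (hα1 : α ≠ 1) (μ ν : ℝ) (hμ : 0 ≤ μ) (hν : 0 ≤ ν) :
    (μ ≠ ν →
      0 < ((2 : ℝ) ^ α * (μ ^ α + ν ^ α) - 2 * (μ + ν) ^ α) / ((2 : ℝ) ^ α - 2)) ∧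
    (μ = ν →
      ((2 : ℝ) ^ α * (μ ^ α + ν ^ α) - 2 * (μ + ν) ^ α) / ((2 : ℝ) ^ α - 2) = 0) := by
  constructor
  · intro hμν
    rcases hα1.lt_or_gt with hα_lt | hα_gt
    · have num_neg := sub_neg.2 (lt_two_mul_add_rpow hα hα_lt hμ hν hμν)
      have den_neg := sub_neg.2 (Real.rpow_lt_self_of_one_lt one_lt_two hα_lt)
      exact div_pos_of_neg_of_neg num_neg den_neg
    · have num_pos := sub_pos.2 (two_mul_add_rpow_lt hα_gt hμ hν hμν)
      have den_pos := sub_pos.2 (Real.self_lt_rpow_of_one_lt one_lt_two hα_gt)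
      exact div_pos num_pos den_pos
  · rintro rfl
    rw [two_mul_add_self_rpow hμ, sub_self, zero_div]
end

section
/- Let (Ω, 𝒜, ℙ) be a probability space, Ω' a metric space equipped with its Borel σ-algebra, X : Ω → Ω' measurable, and Θ a compact metric space. Let r : Θ × Ω' → Ω' be such that for each θ ∈ Θ the map x ↦ r(θ, x) is measurable, and for each x ∈ Ω' the map θ ↦ r(θ, x) is continuous. Let L : Ω' × Ω' → [0, ∞) be measurable and, for each fixed first argument, continuous in its second argument. Assume there is a constant M < ∞ such that L(X(ω), r(θ, X(ω))) ≤ M for ℙ-almost every ω and all θ ∈ Θ. Then the map θ ↦ E[L(X, r(θ, X))] is continuous on Θ, and there exists θ* ∈ Θ attaining its minimum; i.e., the autoencoder regression problem min_{θ∈Θ} E[L(X, r_θ(X))] has a solution. -/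
open MeasureTheory

section Risk

variable {Ω 𝒳 𝒴 Θ : Type*} [MeasurableSpace Ω] {μ : Measure Ω}

/-- The risk `E[L(X, r θ (X))]` of the reconstruction function `r θ`. Data and reconstructions may
live in different spaces. As a Bochner integral it is `0` when the loss is not integrable. -/
noncomputable def reconstructionRisk (μ : Measure Ω) (X : Ω → 𝒳) (r : Θ → 𝒳 → 𝒴)
    (L : 𝒳 → 𝒴 → ℝ) (θ : Θ) : ℝ :=
  ∫ ω, L (X ω) (r θ (X ω)) ∂μ

variable [MeasurableSpace 𝒳] [TopologicalSpace 𝒴] [MeasurableSpace 𝒴]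
  [TopologicalSpace Θ] [FirstCountableTopology Θ]
  {X : Ω → 𝒳} {r : Θ → 𝒳 → 𝒴} {L : 𝒳 → 𝒴 → ℝ} {g : Ω → ℝ}

theorem continuous_reconstructionRisk (hX : AEMeasurable X μ)
    (hr_meas : ∀ θ, Measurable (r θ)) (hr_cont : ∀ x, Continuous fun θ => r θ x)
    (hL_meas : Measurable (Function.uncurry L)) (hL_cont : ∀ x, Continuous (L x))
    (hg : Integrable g μ) (hLg : ∀ θ, ∀ᵐ ω ∂μ, ‖L (X ω) (r θ (X ω))‖ ≤ g ω) :
    Continuous (reconstructionRisk μ X r L) := by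
  have loss_meas (θ : Θ) : Measurable fun x => L x (r θ x) :=
    hL_meas.comp (measurable_id.prodMk (hr_meas θ))
  have loss_cont (x : 𝒳) : Continuous fun θ => L x (r θ x) :=
    (hL_cont x).comp (hr_cont x)
  exact continuous_of_dominated
    (fun θ => ((loss_meas θ).comp_aemeasurable hX).aestronglyMeasurable) hLg hg
    (.of_forall fun ω => loss_cont (X ω))

theorem stmt_6_general [CompactSpace Θ] [Nonempty Θ] (hX : AEMeasurable X μ)
    (hr_meas : ∀ θ, Measurable (r θ)) (hr_cont : ∀ x, Continuous fun θ => r θ x)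
    (hL_meas : Measurable (Function.uncurry L)) (hL_cont : ∀ x, Continuous (L x))
    (hg : Integrable g μ) (hLg : ∀ θ, ∀ᵐ ω ∂μ, ‖L (X ω) (r θ (X ω))‖ ≤ g ω) :
    Continuous (reconstructionRisk μ X r L) ∧
      ∃ θstar, ∀ θ, reconstructionRisk μ X r L θstar ≤ reconstructionRisk μ X r L θ := by
  have risk_cont := continuous_reconstructionRisk hX hr_meas hr_cont hL_meas hL_cont hg hLg
  -- Coercivity is vacuous because the cocompact filter of a compact space is trivial.
  have coercive :
      Filter.Tendsto (reconstructionRisk μ X r L) (Filter.cocompact Θ) Filter.atTop := by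
    simp only [Filter.cocompact_eq_bot, Filter.tendsto_bot]
  exact ⟨risk_cont, risk_cont.exists_forall_le coercive⟩

end Risk

/-- Existence of a solution to the autoencoder regression problem: with a compact
parameter space `Θ`, reconstruction functions `r θ` measurable in the data and
continuous in `θ`, a nonnegative loss `L` continuous in its second argument and
essentially bounded uniformly in `θ`, the risk `θ ↦ E[L(X, r θ (X))]` is continuous
and attains its minimum. -/
theorem stmt_6 {Ω : Type*} [MeasurableSpace Ω] (ℙ : Measure Ω) [IsProbabilityMeasure ℙ]
    {Ω' : Type*} [MetricSpace Ω'] [MeasurableSpace Ω'] [BorelSpace Ω']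
    {Θ : Type*} [MetricSpace Θ] [CompactSpace Θ] [Nonempty Θ]
    (X : Ω → Ω') (hX : Measurable X)
    (r : Θ → Ω' → Ω')
    (hrmeas : ∀ θ : Θ, Measurable (r θ))
    (hrcont : ∀ x : Ω', Continuous fun θ : Θ => r θ x)
    (L : Ω' → Ω' → ℝ)
    (hLmeas : Measurable (Function.uncurry L))
    (hLnonneg : ∀ a b : Ω', 0 ≤ L a b)
    (hLcont : ∀ a : Ω', Continuous (L a))
    (M : ℝ)
    (hbound : ∀ᵐ ω ∂ℙ, ∀ θ : Θ, L (X ω) (r θ (X ω)) ≤ M) :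
    Continuous (fun θ : Θ => ∫ ω, L (X ω) (r θ (X ω)) ∂ℙ) ∧
    ∃ θstar : Θ, ∀ θ : Θ,
      ∫ ω, L (X ω) (r θstar (X ω)) ∂ℙ ≤ ∫ ω, L (X ω) (r θ (X ω)) ∂ℙ := by
  have loss_norm_le (θ : Θ) : ∀ᵐ ω ∂ℙ, ‖L (X ω) (r θ (X ω))‖ ≤ M :=
    hbound.mono fun ω hω => (Real.norm_of_nonneg (hLnonneg _ _)).trans_le (hω θ)
  exact stmt_6_general hX.aemeasurable hrmeas hrcont hLmeas hLcont (integrable_const M) loss_norm_le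
end

section
/- Let d, p ∈ ℕ and q ≥ 1. For a matrix b ∈ [0,∞)^{d×p} and u ∈ [0,∞)^d define f_b(u) := inf_{c ∈ [0,∞)^p} Σ_{i=1}^d |u_i − max_{1≤k≤p} c_k·b_{ik}|. Then: (i) for every b and u the infimum is attained by some c ∈ [0,∞)^p, and 0 ≤ f_b(u) ≤ Σ_{i=1}^d u_i; (ii) the map (b, u) ↦ f_b(u) is continuous on the set {b ∈ [0,∞)^{d×p} : ‖b_{·k}‖_q = 1 for every column k} × [0,∞)^d. -/
open scoped NNReal

/-!
If some entry `c k * b i k` reaches twice the `ℓ¹`-norm of `u`, then `c` does no better than the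
zero vector. Hence the infimum may be taken over a box `[0, M]` of coefficients, which is compact,
so it is attained. If every column of `b` has a positive entry, one box works for all pairs near
`(b, u)`, and an infimum of a jointly continuous function over a fixed compact set depends
continuously on the parameters.
-/

section MaxTimes

open Filter Topology

variable {ι κ : Type*} [Fintype ι]

/-- The `ℓ¹`-distance from `u` to the max-times combination of the columns of `b` with
coefficients `c`. -/
noncomputable def maxTimesCost (b : ι → κ → ℝ) (u : ι → ℝ) (c : κ → ℝ≥0) : ℝ :=
  ∑ i, |u i - ⨆ k, (c k : ℝ) * b i k|

/-- The `ℓ¹`-distance from `u` to the max-times span of the columns of `b`. -/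
noncomputable def maxTimesDist (b : ι → κ → ℝ) (u : ι → ℝ) : ℝ :=
  ⨅ c, maxTimesCost b u c

theorem maxTimesCost_nonneg (b : ι → κ → ℝ) (u : ι → ℝ) (c : κ → ℝ≥0) :
    0 ≤ maxTimesCost b u c :=
  Finset.sum_nonneg fun _ _ => abs_nonneg _

theorem maxTimesCost_zero (b : ι → κ → ℝ) (u : ι → ℝ) : maxTimesCost b u 0 = ∑ i, |u i| := by
  simp [maxTimesCost]

theorem bddBelow_range_maxTimesCost (b : ι → κ → ℝ) (u : ι → ℝ) :
    BddBelow (Set.range (maxTimesCost b u)) :=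
  ⟨0, Set.forall_mem_range.2 (maxTimesCost_nonneg b u)⟩

theorem maxTimesDist_nonneg (b : ι → κ → ℝ) (u : ι → ℝ) : 0 ≤ maxTimesDist b u :=
  Real.iInf_nonneg (maxTimesCost_nonneg b u)

theorem maxTimesDist_le_maxTimesCost (b : ι → κ → ℝ) (u : ι → ℝ) (c : κ → ℝ≥0) :
    maxTimesDist b u ≤ maxTimesCost b u c :=
  ciInf_le (bddBelow_range_maxTimesCost b u) c

theorem maxTimesDist_le_sum_abs (b : ι → κ → ℝ) (u : ι → ℝ) : maxTimesDist b u ≤ ∑ i, |u i| :=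
  (maxTimesDist_le_maxTimesCost b u 0).trans_eq (maxTimesCost_zero b u)

/-- A box `[0, M]` large enough to compute `maxTimesDist b u`: each nonzero column of `b` has a
positive entry that `M` scales up to twice the `ℓ¹`-norm of `u`. Zero columns contribute nothing
to the cost, so their coefficients are not constrained. -/
def IsCoeffBound (b : ι → κ → ℝ) (u : ι → ℝ) (M : κ → ℝ≥0) : Prop :=
  ∀ k, (∀ i, b i k = 0) ∨ ∃ i, 0 < b i k ∧ 2 * ∑ j, |u j| ≤ M k * b i k

theorem exists_isCoeffBound {b : ι → κ → ℝ} (hb : ∀ i k, 0 ≤ b i k) (u : ι → ℝ) :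
    ∃ M, IsCoeffBound b u M := by
  have exists_bound (k : κ) :
      ∃ m : ℝ≥0, (∀ i, b i k = 0) ∨ ∃ i, 0 < b i k ∧ 2 * ∑ j, |u j| ≤ m * b i k := by
    by_cases hzero : ∀ i, b i k = 0
    · exact ⟨0, .inl hzero⟩
    · obtain ⟨i, hi⟩ := not_forall.1 hzero
      have hpos : 0 < b i k := (hb i k).lt_of_ne' hi
      obtain ⟨n, hn⟩ := exists_lt_nsmul hpos (2 * ∑ j, |u j|)
      exact ⟨n, .inr ⟨i, hpos, by simpa using hn.le⟩⟩
  exact Classical.skolem.1 exists_bound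

variable [Finite κ]

theorem exists_eventually_isCoeffBound {b : ι → κ → ℝ} (hb : ∀ k, ∃ i, 0 < b i k) (u : ι → ℝ) :
    ∃ M, ∀ᶠ x : (ι → κ → ℝ) × (ι → ℝ) in 𝓝 (b, u), IsCoeffBound x.1 x.2 M := by
  choose i hi using hb
  choose n hn using fun k => exists_lt_nsmul (hi k) (2 * ∑ j, |u j|)
  simp only [nsmul_eq_mul] at hn
  refine ⟨fun k => n k, eventually_all.2 fun k => ?_⟩
  have hpos : ∀ᶠ x : (ι → κ → ℝ) × (ι → ℝ) in 𝓝 (b, u), 0 < x.1 (i k) k :=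
    continuousAt_const.eventually_lt (by fun_prop) (hi k)
  have hlarge : ∀ᶠ x : (ι → κ → ℝ) × (ι → ℝ) in 𝓝 (b, u),
      2 * ∑ j, |x.2 j| < n k * x.1 (i k) k :=
    ContinuousAt.eventually_lt (by fun_prop) (by fun_prop) (hn k)
  filter_upwards [hpos, hlarge] with x hxpos hxlarge
  exact .inr ⟨i k, hxpos, by simpa using hxlarge.le⟩

theorem sum_abs_le_maxTimesCost {b : ι → κ → ℝ} {u : ι → ℝ} {c : κ → ℝ≥0} {i : ι} {k : κ}
    (h : 2 * ∑ j, |u j| ≤ c k * b i k) : ∑ j, |u j| ≤ maxTimesCost b u c := by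
  set v : ℝ := ⨆ k, (c k : ℝ) * b i k
  have hv : c k * b i k ≤ v := Finite.le_ciSup (fun k => (c k : ℝ) * b i k) k
  have hui : |u i| ≤ ∑ j, |u j| :=
    Finset.single_le_sum (f := fun j => |u j|) (fun _ _ => abs_nonneg _) (Finset.mem_univ i)
  calc ∑ j, |u j| ≤ v - u i := by linarith [le_abs_self (u i)]
    _ ≤ |u i - v| := by simpa using neg_le_abs (u i - v)
    _ ≤ maxTimesCost b u c :=
      Finset.single_le_sum (f := fun i => |u i - ⨆ k, (c k : ℝ) * b i k|)
        (fun _ _ => abs_nonneg _) (Finset.mem_univ i)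

namespace IsCoeffBound

variable {b : ι → κ → ℝ} {u : ι → ℝ} {M : κ → ℝ≥0}

theorem exists_mem_Icc_maxTimesCost_le (hM : IsCoeffBound b u M) (c : κ → ℝ≥0) :
    ∃ c' ∈ Set.Icc 0 M, maxTimesCost b u c' ≤ maxTimesCost b u c := by
  by_cases h : ∃ i k, 2 * ∑ j, |u j| ≤ c k * b i k
  · obtain ⟨i, k, hik⟩ := h
    exact ⟨0, ⟨le_rfl, zero_le⟩, (maxTimesCost_zero b u).trans_le (sum_abs_le_maxTimesCost hik)⟩
  · push Not at h
    -- Truncating `c` at `M` only changes the coefficients of zero columns.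
    have inf_mul (i k) : ((c ⊓ M) k : ℝ) * b i k = c k * b i k := by
      rcases hM k with hzero | ⟨j, hpos, hj⟩
      · simp [hzero i]
      · have hlt : (c k : ℝ) < M k := lt_of_mul_lt_mul_right ((h j k).trans_le hj) hpos.le
        rw [Pi.inf_apply, inf_eq_left.2 (NNReal.coe_lt_coe.1 hlt).le]
    exact ⟨c ⊓ M, ⟨zero_le, inf_le_right⟩, by simp only [maxTimesCost, inf_mul, le_refl]⟩

theorem maxTimesDist_eq_sInf_image (hM : IsCoeffBound b u M) :
    maxTimesDist b u = sInf (maxTimesCost b u '' Set.Icc 0 M) := by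
  apply le_antisymm
  · refine le_csInf ((Set.nonempty_Icc.2 zero_le).image _) (Set.forall_mem_image.2 fun c _ => ?_)
    exact maxTimesDist_le_maxTimesCost b u c
  · refine le_ciInf fun c => ?_
    obtain ⟨c', hc', hle⟩ := hM.exists_mem_Icc_maxTimesCost_le c
    have hbdd : BddBelow (maxTimesCost b u '' Set.Icc 0 M) :=
      (bddBelow_range_maxTimesCost b u).mono (Set.image_subset_range _ _)
    exact (csInf_le hbdd (Set.mem_image_of_mem _ hc')).trans hle

end IsCoeffBound

theorem continuous_maxTimesCost [Nonempty κ] :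
    Continuous fun x : ((ι → κ → ℝ) × (ι → ℝ)) × (κ → ℝ≥0) => maxTimesCost x.1.1 x.1.2 x.2 := by
  have := Fintype.ofFinite κ
  have continuous_iSup (i : ι) : Continuous fun x : ((ι → κ → ℝ) × (ι → ℝ)) × (κ → ℝ≥0) =>
      ⨆ k, (x.2 k : ℝ) * x.1.1 i k := by
    simp_rw [← Finset.sup'_univ_eq_ciSup]
    exact Continuous.finset_sup'_apply _ fun k _ => by fun_prop
  unfold maxTimesCost
  fun_prop

theorem exists_maxTimesDist_eq_maxTimesCost [Nonempty κ] {b : ι → κ → ℝ}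
    (hb : ∀ i k, 0 ≤ b i k) (u : ι → ℝ) : ∃ c, maxTimesDist b u = maxTimesCost b u c := by
  obtain ⟨M, hM⟩ := exists_isCoeffBound hb u
  have hcont : Continuous (maxTimesCost b u) :=
    continuous_maxTimesCost.comp (Continuous.prodMk_right (b, u))
  obtain ⟨c, -, hc⟩ := isCompact_Icc.exists_sInf_image_eq
    (Set.nonempty_Icc.2 (zero_le (a := M))) hcont.continuousOn
  exact ⟨c, hM.maxTimesDist_eq_sInf_image.trans hc⟩

theorem continuousAt_maxTimesDist [Nonempty κ] {b : ι → κ → ℝ} (hb : ∀ k, ∃ i, 0 < b i k)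
    (u : ι → ℝ) :
    ContinuousAt (fun x : (ι → κ → ℝ) × (ι → ℝ) => maxTimesDist x.1 x.2) (b, u) := by
  obtain ⟨M, hM⟩ := exists_eventually_isCoeffBound hb u
  have hcont : Continuous fun x : (ι → κ → ℝ) × (ι → ℝ) =>
      sInf (maxTimesCost x.1 x.2 '' Set.Icc 0 M) :=
    isCompact_Icc.continuous_sInf (f := fun x : (ι → κ → ℝ) × (ι → ℝ) => maxTimesCost x.1 x.2)
      continuous_maxTimesCost
  exact hcont.continuousAt.congr (hM.mono fun _ hx => hx.maxTimesDist_eq_sInf_image.symm)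

end MaxTimes

theorem exists_pos_of_rpow_sum_rpow_ne_zero {ι : Type*} [Fintype ι] {a : ι → ℝ}
    (ha : ∀ i, 0 ≤ a i) {q : ℝ} (hq : q ≠ 0) (h : (∑ i, a i ^ q) ^ (1 / q) ≠ 0) :
    ∃ i, 0 < a i := by
  contrapose! h
  have hzero (i : ι) : a i = 0 := (h i).antisymm (ha i)
  simp [hzero, Real.zero_rpow hq, Real.zero_rpow (inv_ne_zero hq)]

theorem stmt_15_general {ι κ : Type*} [Fintype ι] [Finite κ] [Nonempty κ] :
    (∀ (b : ι → κ → ℝ) (u : ι → ℝ), (∀ i k, 0 ≤ b i k) →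
      (∃ c : κ → ℝ≥0, maxTimesDist b u = maxTimesCost b u c) ∧
      0 ≤ maxTimesDist b u ∧ maxTimesDist b u ≤ ∑ i, |u i|) ∧
    ContinuousOn (fun bu : (ι → κ → ℝ) × (ι → ℝ) => maxTimesDist bu.1 bu.2)
      {bu | ∀ k, ∃ i, 0 < bu.1 i k} :=
  ⟨fun b u hb => ⟨exists_maxTimesDist_eq_maxTimesCost hb u, maxTimesDist_nonneg b u,
    maxTimesDist_le_sum_abs b u⟩,
    fun bu hb => (continuousAt_maxTimesDist hb bu.2).continuousWithinAt⟩

/-- Properties of the ℓ¹-distance `f_b(u)` from `u` to the max-times span of the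
columns of `b`: the defining infimum over `c ∈ [0,∞)^p` is attained,
`0 ≤ f_b(u) ≤ Σ_i u_i`, and `(b,u) ↦ f_b(u)` is continuous on the set of
nonnegative `(b,u)` with `q`-normalized columns. -/
theorem stmt_15 (d p : ℕ) (hd : 0 < d) (hp : 0 < p) (q : ℝ) (hq : 1 ≤ q)
    (f : (Fin d → Fin p → ℝ) → (Fin d → ℝ) → ℝ)
    (hf : ∀ b u, f b u = ⨅ c : Fin p → ℝ≥0, ∑ i, |u i - ⨆ k, (c k : ℝ) * b i k|) :
    (∀ b u, (∀ i k, 0 ≤ b i k) → (∀ i, 0 ≤ u i) →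
      (∃ c : Fin p → ℝ≥0, f b u = ∑ i, |u i - ⨆ k, (c k : ℝ) * b i k|) ∧
      0 ≤ f b u ∧ f b u ≤ ∑ i, u i) ∧
    ContinuousOn (fun bu : (Fin d → Fin p → ℝ) × (Fin d → ℝ) => f bu.1 bu.2)
      {bu | (∀ i k, 0 ≤ bu.1 i k) ∧ (∀ i, 0 ≤ bu.2 i) ∧
        ∀ k, (∑ i, bu.1 i k ^ q) ^ (1 / q) = 1} := by
  have : Nonempty (Fin p) := ⟨⟨0, hp⟩⟩
  obtain rfl : f = maxTimesDist := funext₂ hf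
  refine ⟨fun b u hb hu => ?_, stmt_15_general.2.mono fun bu ⟨hb, _, hnorm⟩ k =>
    exists_pos_of_rpow_sum_rpow_ne_zero (hb · k) (by positivity) ((hnorm k).trans_ne one_ne_zero)⟩
  simpa only [maxTimesCost, abs_of_nonneg (hu _)] using stmt_15_general.1 b u hb
end
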